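/- Law of large numbers for the Type-II elephant random walk: for every memory parameter p ∈ (0,1), the walk satisfies S_n/n → (ū + w̄)/2 almost surely as n → ∞. -/

import Mathlib

/-!
The two index sequences are treated separately. For an index `j`, let `X k` be the indicator of
`ξ k = j` minus `1 / m`, and let `y n` be the average of `X 1, …, X n`. The reinforcement rule says
`E[X (n+1) | ℱ n] = a * y n` with `a = (m p - 1) / (m - 1) < 1`, so the second moments
`V n = E[(y n) ^ 2]` satisfy
`V (n+1) + (1 - a) * V n / (n+1) ≤ V n + 1 / (n+1) ^ 2`.
Telescoping gives `∑ V n / (n+1) < ∞`, hence almost surely `∑ (y n) ^ 2 / (n+1) < ∞`.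

The increments of `y` are at most `2 / (n+1)`, so those of `y ^ 3` are dominated by
`((y n) ^ 2 + (y (n+1)) ^ 2) / (n+1)` and are summable. Thus `y ^ 3` converges, and its limit is `0`
because the harmonic series diverges (`tendsto_zero_of_summable_sq_div`). Every index therefore has
limiting frequency `1 / m` (`ae_tendsto_frequency`), which gives the law of large numbers for each
sequence of steps (`ae_tendsto_average`). The walk at time `n` consists of `⌈n/2⌉` steps of the
first sequence and `⌊n/2⌋` of the second, whence the factor `1 / 2`.
-/

open MeasureTheory ProbabilityTheory Filter Finset Topology Matrix

noncomputable section

/-- The σ-algebra generated by the steps `ξ 1, …, ξ n` of the walk. -/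
def stepFiltration {Ω : Type*} [MeasurableSpace Ω] {m : ℕ} (ξ : ℕ → Ω → Fin m) (n : ℕ) :
    MeasurableSpace Ω :=
  ⨆ k ∈ Finset.Icc 1 n, MeasurableSpace.comap (ξ k) ⊤

/-- A Type-II elephant random walk with memory parameter `p`: two independent
reinforced sequences of step indices, `ξ` (values in `Fin m`, first step `i0`) and
`η` (values in `Fin m'`, first step `j0`). -/
structure IsTypeIIERW {Ω : Type*} [MeasurableSpace Ω] (μ : Measure Ω)
    (m m' : ℕ) (p : ℝ) (i0 : Fin m) (j0 : Fin m')
    (ξ : ℕ → Ω → Fin m) (η : ℕ → Ω → Fin m') : Prop where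
  measurable_fst : ∀ n, Measurable (ξ n)
  measurable_snd : ∀ n, Measurable (η n)
  first_fst : ∀ᵐ ω ∂μ, ξ 1 ω = i0
  first_snd : ∀ᵐ ω ∂μ, η 1 ω = j0
  cond_fst : ∀ n : ℕ, 1 ≤ n → ∀ j : Fin m,
    (μ[(fun ω => if ξ (n + 1) ω = j then (1 : ℝ) else 0) | stepFiltration ξ n]) =ᵐ[μ]
      (fun ω => (1 / (n : ℝ)) * ∑ k ∈ Finset.Icc 1 n,
        (p * (if ξ k ω = j then (1 : ℝ) else 0)
          + ((1 - p) / ((m : ℝ) - 1)) * (if ξ k ω = j then (0 : ℝ) else 1)))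
  cond_snd : ∀ n : ℕ, 1 ≤ n → ∀ j : Fin m',
    (μ[(fun ω => if η (n + 1) ω = j then (1 : ℝ) else 0) | stepFiltration η n]) =ᵐ[μ]
      (fun ω => (1 / (n : ℝ)) * ∑ k ∈ Finset.Icc 1 n,
        (p * (if η k ω = j then (1 : ℝ) else 0)
          + ((1 - p) / ((m' : ℝ) - 1)) * (if η k ω = j then (0 : ℝ) else 1)))
  indep : IndepFun (fun ω => fun k => ξ k ω) (fun ω => fun k => η k ω) μ

/-! ### Summability lemmas -/

/-- Summability of `y n ^ 2 / (n + 1)` with increments `O(1 / (n + 1))` makes the increments of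
`y ^ 3` summable, so `y ^ 3` converges; a nonzero limit would contradict the divergence of the
harmonic series. -/
lemma tendsto_zero_of_summable_sq_div (y : ℕ → ℝ) (C : ℝ)
    (hinc : ∀ n : ℕ, |y (n + 1) - y n| ≤ C / ((n : ℝ) + 1))
    (hs : Summable fun n : ℕ => y n ^ 2 / ((n : ℝ) + 1)) :
    Tendsto y atTop (𝓝 0) := by
  have hC : 0 ≤ C := by
    have := (abs_nonneg _).trans (hinc 0)
    simpa using this
  have hs' : Summable fun n : ℕ => y (n + 1) ^ 2 / ((n : ℝ) + 1) := by
    refine Summable.of_nonneg_of_le (fun n => by positivity) (fun n => ?_)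
      (((summable_nat_add_iff 1).2 hs).mul_left 2)
    push_cast
    have h1 : (0 : ℝ) < (n : ℝ) + 1 := by positivity
    rw [← mul_div_assoc, div_le_div_iff₀ h1 (by positivity)]
    have : 0 ≤ y (n + 1) ^ 2 * n := by positivity
    nlinarith
  have hcauchy : CauchySeq fun n => y n ^ 3 := by
    refine cauchySeq_of_summable_dist (Summable.of_nonneg_of_le (fun n => dist_nonneg)
      (fun n => ?_) ((hs.add hs').mul_left (3 / 2 * C)))
    have hfac : y n ^ 3 - y (n + 1) ^ 3
        = -((y (n + 1) - y n) * (y (n + 1) ^ 2 + y n * y (n + 1) + y n ^ 2)) := by ring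
    rw [Real.dist_eq, Nat.succ_eq_add_one, hfac, abs_neg, abs_mul,
      abs_of_nonneg (a := y (n + 1) ^ 2 + y n * y (n + 1) + y n ^ 2)
        (by nlinarith [sq_nonneg (y (n + 1) + y n)])]
    have h1 : (0 : ℝ) < (n : ℝ) + 1 := by positivity
    calc _ ≤ C / ((n : ℝ) + 1) * (3 / 2 * (y n ^ 2 + y (n + 1) ^ 2)) := by
          refine mul_le_mul (hinc n) ?_ ?_ (by positivity)
          · nlinarith [sq_nonneg (y (n + 1) - y n)]
          · nlinarith [sq_nonneg (y (n + 1) + y n)]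
      _ = _ := by field_simp
  obtain ⟨l, hl⟩ := cauchySeq_tendsto_of_complete hcauchy
  have habs : Tendsto (fun n => |y n| ^ 3) atTop (𝓝 |l|) := by
    simpa [abs_pow] using hl.abs
  have hl0 : l = 0 := by
    by_contra hne
    have hpos : 0 < |l| := abs_pos.2 hne
    -- `|y n|` is eventually bounded below by `c = min 1 (|l| / 2)`, whose cube is below `|l|`
    obtain ⟨c, hc0, hc1, hcl⟩ : ∃ c : ℝ, 0 < c ∧ c ≤ 1 ∧ c < |l| :=
      ⟨min 1 (|l| / 2), by positivity, min_le_left _ _,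
        (min_le_right _ _).trans_lt (by linarith)⟩
    have hc3 : c ^ 3 < |l| := (pow_le_of_le_one hc0.le hc1 (by norm_num)).trans_lt hcl
    have hev : ∀ᶠ n in atTop, c ≤ |y n| := by
      filter_upwards [habs.eventually (lt_mem_nhds hc3)] with n hn
      exact (lt_of_pow_lt_pow_left₀ 3 (abs_nonneg _) hn).le
    obtain ⟨N, hN⟩ := eventually_atTop.1 hev
    have hsum : Summable fun n : ℕ => 1 / ((n + (N + 1) : ℕ) : ℝ) := by
      refine Summable.of_nonneg_of_le (fun n => by positivity) (fun n => ?_)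
        (((summable_nat_add_iff N).2 hs).mul_left (1 / c ^ 2))
      have hy : c ^ 2 ≤ y (n + N) ^ 2 := by
        rw [← sq_abs (y (n + N))]
        exact pow_le_pow_left₀ hc0.le (hN _ (by omega)) 2
      push_cast
      rw [div_mul_div_comm, one_mul, div_le_div_iff₀ (by positivity) (by positivity)]
      have h1 : (0 : ℝ) < (n : ℝ) + N + 1 := by positivity
      nlinarith
    exact Real.not_summable_one_div_natCast
      ((summable_nat_add_iff (f := fun n : ℕ => 1 / (n : ℝ)) (N + 1)).1 hsum)
  subst hl0
  rw [tendsto_zero_iff_abs_tendsto_zero]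
  rw [Metric.tendsto_atTop] at habs ⊢
  intro ε hε
  obtain ⟨N, hN⟩ := habs (ε ^ 3) (by positivity)
  refine ⟨N, fun n hn => ?_⟩
  have := hN n hn
  simp only [abs_zero, Real.dist_eq, sub_zero, abs_pow, abs_abs, Function.comp] at this ⊢
  exact lt_of_pow_lt_pow_left₀ 3 hε.le this

lemma ae_summable_of_summable_integral {Ω : Type*} [MeasurableSpace Ω] (μ : Measure Ω)
    (f : ℕ → Ω → ℝ) (h0 : ∀ n ω, 0 ≤ f n ω) (hm : ∀ n, Measurable (f n))
    (hi : ∀ n, Integrable (f n) μ) (hs : Summable fun n => ∫ ω, f n ω ∂μ) :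
    ∀ᵐ ω ∂μ, Summable fun n => f n ω := by
  have hfin : ∫⁻ ω, ∑' n, ENNReal.ofReal (f n ω) ∂μ ≠ ⊤ := by
    rw [lintegral_tsum fun n => (hm n).ennreal_ofReal.aemeasurable]
    simp_rw [← fun n => ofReal_integral_eq_lintegral_ofReal (hi n) (ae_of_all _ (h0 n))]
    exact hs.tsum_ofReal_ne_top
  filter_upwards [ae_lt_top (Measurable.tsum fun n => (hm n).ennreal_ofReal) hfin]
    with ω hω
  simpa [ENNReal.toReal_ofReal, h0] using ENNReal.summable_toReal hω.ne

/-- Telescoping form of the Robbins–Siegmund argument for deterministic sequences. -/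
lemma summable_of_recursion (V : ℕ → ℝ) (c : ℝ) (hc : 0 < c) (hV : ∀ n, 0 ≤ V n)
    (hrec : ∀ n : ℕ, V (n + 1) + c * (V n / ((n : ℝ) + 1)) ≤ V n + 1 / ((n : ℝ) + 1) ^ 2) :
    Summable fun n : ℕ => V n / ((n : ℝ) + 1) := by
  have hsq : Summable fun n : ℕ => 1 / ((n : ℝ) + 1) ^ 2 := by
    have := (summable_nat_add_iff 1).2 (Real.summable_one_div_nat_pow.2 one_lt_two)
    simpa using this
  refine summable_of_sum_range_le (c := (V 0 + ∑' n : ℕ, 1 / ((n : ℝ) + 1) ^ 2) / c)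
    (fun n => div_nonneg (hV n) (by positivity)) (fun n => ?_)
  have key : V n + c * ∑ i ∈ range n, V i / ((i : ℝ) + 1)
      ≤ V 0 + ∑ i ∈ range n, 1 / ((i : ℝ) + 1) ^ 2 := by
    induction n with
    | zero => simp
    | succ n ih =>
      rw [sum_range_succ, sum_range_succ, mul_add]
      linarith [hrec n]
  have hle := hsq.sum_le_tsum (range n) (fun i _ => by positivity)
  rw [le_div_iff₀ hc]
  linarith [hV n]

/-! ### A single reinforced sequence -/

/-- Almost sure convergence of the empirical frequency of each index in a single reinforced
sequence. -/
lemma ae_tendsto_frequency {Ω : Type*} [MeasurableSpace Ω] (μ : Measure Ω)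
    [IsProbabilityMeasure μ] (m : ℕ) (hm : 2 ≤ m) (p : ℝ) (hp1 : p < 1) (ξ : ℕ → Ω → Fin m)
    (hξ : ∀ n, Measurable (ξ n)) (j : Fin m)
    (hcond : ∀ n : ℕ, 1 ≤ n →
      (μ[(fun ω => if ξ (n + 1) ω = j then (1 : ℝ) else 0) | stepFiltration ξ n]) =ᵐ[μ]
        (fun ω => (1 / (n : ℝ)) * ∑ k ∈ Finset.Icc 1 n,
          (p * (if ξ k ω = j then (1 : ℝ) else 0)
            + ((1 - p) / ((m : ℝ) - 1)) * (if ξ k ω = j then (0 : ℝ) else 1)))) :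
    ∀ᵐ ω ∂μ, Tendsto (fun n : ℕ => (n : ℝ)⁻¹ * ∑ k ∈ Finset.Icc 1 n,
      (if ξ k ω = j then (1 : ℝ) else 0)) atTop (𝓝 (m : ℝ)⁻¹) := by
  have hm2 : (2 : ℝ) ≤ m := by exact_mod_cast hm
  have hm1 : (0 : ℝ) < (m : ℝ) - 1 := by linarith
  have hminv : (m : ℝ)⁻¹ ≤ 1 := inv_le_one_of_one_le₀ (by linarith)
  have hminv0 : 0 ≤ (m : ℝ)⁻¹ := by positivity
  set a : ℝ := (m * p - 1) / (m - 1) with ha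
  have ha1 : a < 1 := by
    rw [ha, div_lt_one hm1]
    nlinarith
  -- `I` is the indicator of the index `j`, `X` its centring, `y` the running average of `X`
  set I : ℕ → Ω → ℝ := fun k ω => if ξ k ω = j then (1 : ℝ) else 0 with hI
  set X : ℕ → Ω → ℝ := fun k ω => I k ω - (m : ℝ)⁻¹ with hX
  set y : ℕ → Ω → ℝ := fun n ω => (n : ℝ)⁻¹ * ∑ k ∈ Finset.Icc 1 n, X k ω with hy
  have hIm : ∀ k, Measurable (I k) := fun k =>
    Measurable.ite (hξ k (measurableSet_singleton j)) measurable_const measurable_const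
  have hXm : ∀ k, Measurable (X k) := fun k => (hIm k).sub_const _
  have hym : ∀ n, Measurable (y n) := fun n =>
    (Finset.measurable_sum _ fun k _ => hXm k).const_mul _
  have hXb : ∀ k ω, |X k ω| ≤ 1 := by
    intro k ω
    simp only [hX, hI]
    rw [abs_le]
    split_ifs <;> constructor <;> linarith
  have hyb : ∀ n ω, |y n ω| ≤ 1 := by
    intro n ω
    simp only [hy]
    rw [abs_mul, abs_of_nonneg (by positivity : (0 : ℝ) ≤ (n : ℝ)⁻¹)]
    have h1 : |∑ k ∈ Finset.Icc 1 n, X k ω| ≤ n := by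
      refine (Finset.abs_sum_le_sum_abs _ _).trans ?_
      refine (Finset.sum_le_sum fun k _ => hXb k ω).trans ?_
      simp
    calc _ ≤ (n : ℝ)⁻¹ * n := by gcongr
      _ ≤ 1 := inv_mul_le_one
  have hstep : ∀ n ω, y (n + 1) ω = (n * y n ω + X (n + 1) ω) / ((n : ℝ) + 1) := by
    intro n ω
    simp only [hy]
    rw [Finset.sum_Icc_succ_top (by omega)]
    rcases Nat.eq_zero_or_pos n with rfl | hn
    · simp
    · have : (n : ℝ) ≠ 0 := by positivity
      push_cast
      field_simp
  have hinc : ∀ n ω, |y (n + 1) ω - y n ω| ≤ 2 / ((n : ℝ) + 1) := by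
    intro n ω
    have h1 : (0 : ℝ) < (n : ℝ) + 1 := by positivity
    have : y (n + 1) ω - y n ω = (X (n + 1) ω - y n ω) / ((n : ℝ) + 1) := by
      rw [hstep]; field_simp; ring
    rw [this, abs_div, abs_of_pos h1]
    gcongr
    have := abs_sub (X (n + 1) ω) (y n ω)
    linarith [hXb (n + 1) ω, hyb n ω]
  have hbint : ∀ f : Ω → ℝ, Measurable f → (∀ ω, |f ω| ≤ 1) → Integrable f μ :=
    fun f hf hb => Integrable.of_bound hf.aestronglyMeasurable 1 (ae_of_all _ hb)
  have hF : ∀ n, stepFiltration ξ n ≤ (inferInstance : MeasurableSpace Ω) := by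
    intro n
    refine iSup₂_le fun k _ => ?_
    exact (hξ k).comap_le
  have hXadapt : ∀ n, ∀ k ∈ Finset.Icc 1 n, Measurable[stepFiltration ξ n] (X k) := by
    intro n k hk
    have hk' : Measurable[stepFiltration ξ n] (ξ k) :=
      Measurable.mono (comap_measurable (ξ k))
        (le_iSup₂ (f := fun k (_ : k ∈ Finset.Icc 1 n) => MeasurableSpace.comap (ξ k) ⊤) k hk)
        le_rfl
    exact (measurable_of_finite (fun i : Fin m => (if i = j then (1 : ℝ) else 0) - (m : ℝ)⁻¹)).comp
      hk'
  have hyadapt : ∀ n, Measurable[stepFiltration ξ n] (y n) := fun n =>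
    Measurable.const_mul (m := stepFiltration ξ n)
      (Finset.measurable_sum (m := stepFiltration ξ n) _ fun k hk => hXadapt n k hk) _
  -- the drift identity `E[X (n+1) | ℱ n] = a * y n`, written for the uncentred indicator
  have hdrift : ∀ n : ℕ, 1 ≤ n → μ[I (n + 1) | stepFiltration ξ n] =ᵐ[μ]
      fun ω => a * y n ω + (m : ℝ)⁻¹ := by
    intro n hn
    filter_upwards [hcond n hn] with ω hω
    rw [hω]
    have hterm : ∀ k, (p * (if ξ k ω = j then (1 : ℝ) else 0)
        + ((1 - p) / ((m : ℝ) - 1)) * (if ξ k ω = j then (0 : ℝ) else 1))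
        = a * X k ω + (m : ℝ)⁻¹ := by
      intro k
      have : (m : ℝ) ≠ 0 := by positivity
      simp only [hX, hI, ha]
      split_ifs <;> field_simp <;> ring
    have hn0 : (n : ℝ) ≠ 0 := by positivity
    simp_rw [hterm]
    rw [Finset.sum_add_distrib, ← Finset.mul_sum]
    simp only [hy, Finset.sum_const, Nat.card_Icc, Nat.add_sub_cancel, nsmul_eq_mul]
    field_simp
  have hcross : ∀ n : ℕ, ∫ ω, y n ω * X (n + 1) ω ∂μ = a * ∫ ω, y n ω ^ 2 ∂μ := by
    intro n
    rcases Nat.eq_zero_or_pos n with rfl | hn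
    · simp [hy]
    have hIb : ∀ ω, |I (n + 1) ω| ≤ 1 := by
      intro ω; simp only [hI]; split_ifs <;> simp
    have hyI : Integrable (fun ω => y n ω * I (n + 1) ω) μ :=
      hbint _ ((hym n).mul (hIm _)) fun ω => by
        rw [abs_mul]
        exact mul_le_one₀ (hyb n ω) (abs_nonneg _) (hIb ω)
    have hyi := hbint _ (hym n) (hyb n)
    have hy2 : Integrable (fun ω => y n ω ^ 2) μ := hbint _ ((hym n).pow_const 2) fun ω => by
      rw [abs_pow]; exact pow_le_one₀ (abs_nonneg _) (hyb n ω)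
    have h1 : ∫ ω, y n ω * I (n + 1) ω ∂μ = ∫ ω, (a * y n ω ^ 2 + (m : ℝ)⁻¹ * y n ω) ∂μ := by
      have hce := condExp_mul_of_stronglyMeasurable_left (m := stepFiltration ξ n)
        (hyadapt n).stronglyMeasurable hyI (hbint _ (hIm (n + 1)) hIb)
      have h2 : ∫ ω, y n ω * I (n + 1) ω ∂μ
          = ∫ ω, (μ[y n * I (n + 1) | stepFiltration ξ n]) ω ∂μ := (integral_condExp (hF n)).symm
      rw [h2]
      refine integral_congr_ae ?_
      filter_upwards [hce, hdrift n hn] with ω h3 h4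
      rw [h3, Pi.mul_apply, h4]
      ring
    have h5 : ∀ ω, y n ω * X (n + 1) ω = y n ω * I (n + 1) ω - (m : ℝ)⁻¹ * y n ω := by
      intro ω; simp only [hX]; ring
    simp_rw [h5]
    rw [integral_sub hyI (hyi.const_mul _), h1,
      integral_add (hy2.const_mul _) (hyi.const_mul _), integral_const_mul]
    ring
  have hy2i : ∀ n, Integrable (fun ω => y n ω ^ 2) μ := fun n =>
    hbint _ ((hym n).pow_const 2) fun ω => by
      rw [abs_pow]; exact pow_le_one₀ (abs_nonneg _) (hyb n ω)
  have hX2i : ∀ n, Integrable (fun ω => X n ω ^ 2) μ := fun n =>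
    hbint _ ((hXm n).pow_const 2) fun ω => by
      rw [abs_pow]; exact pow_le_one₀ (abs_nonneg _) (hXb n ω)
  have hyXi : ∀ n, Integrable (fun ω => y n ω * X (n + 1) ω) μ := fun n =>
    hbint _ ((hym n).mul (hXm _)) fun ω => by
      rw [abs_mul]; exact mul_le_one₀ (hyb n ω) (abs_nonneg _) (hXb _ ω)
  have hsecond : ∀ n : ℕ, ∫ ω, y (n + 1) ω ^ 2 ∂μ
      ≤ (((n : ℝ) ^ 2 + 2 * a * n) * ∫ ω, y n ω ^ 2 ∂μ + 1) / ((n : ℝ) + 1) ^ 2 := by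
    intro n
    have h1 : ∀ ω, y (n + 1) ω ^ 2 = ((n : ℝ) ^ 2 * y n ω ^ 2
        + 2 * n * (y n ω * X (n + 1) ω) + X (n + 1) ω ^ 2) / ((n : ℝ) + 1) ^ 2 := by
      intro ω
      rw [hstep, div_pow]
      ring
    have hX2 : ∫ ω, X (n + 1) ω ^ 2 ∂μ ≤ 1 := by
      have := integral_mono (hX2i (n + 1)) (integrable_const (1 : ℝ))
        (fun ω => (sq_le_one_iff_abs_le_one _).2 (hXb (n + 1) ω))
      simpa using this
    simp_rw [h1]
    have hlin : Integrable (fun ω => (n : ℝ) ^ 2 * y n ω ^ 2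
        + 2 * n * (y n ω * X (n + 1) ω)) μ :=
      ((hy2i n).const_mul _).add ((hyXi n).const_mul _)
    rw [integral_div, integral_add hlin (hX2i (n + 1)), integral_add ((hy2i n).const_mul _) ((hyXi n).const_mul _),
      integral_const_mul, integral_const_mul, hcross]
    gcongr
    linarith
  have hsumV : Summable fun n : ℕ => (∫ ω, y n ω ^ 2 ∂μ) / ((n : ℝ) + 1) := by
    refine summable_of_recursion _ (1 - a) (by linarith)
      (fun n => integral_nonneg fun ω => sq_nonneg _) (fun n => ?_)
    have hV0 : 0 ≤ ∫ ω, y n ω ^ 2 ∂μ := integral_nonneg fun ω => sq_nonneg _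
    have hrec := hsecond n
    rcases Nat.eq_zero_or_pos n with rfl | hn
    · have hz : ∫ ω, y 0 ω ^ 2 ∂μ = 0 := by simp [hy]
      rw [hz] at hrec ⊢
      simpa using hrec
    set V := ∫ ω, y n ω ^ 2 ∂μ
    have hn1 : (1 : ℝ) ≤ n := by exact_mod_cast hn
    have h1 : (0 : ℝ) < (n : ℝ) + 1 := by positivity
    have hkey : (((n : ℝ) ^ 2 + 2 * a * n) * V + 1) / ((n : ℝ) + 1) ^ 2
        + (1 - a) * (V / ((n : ℝ) + 1)) ≤ V + 1 / ((n : ℝ) + 1) ^ 2 := by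
      have e1 : (((n : ℝ) ^ 2 + 2 * a * n) * V + 1) / ((n : ℝ) + 1) ^ 2
          + (1 - a) * (V / ((n : ℝ) + 1))
          = V + 1 / ((n : ℝ) + 1) ^ 2
            - ((1 - a) * (n - 1) + 1) * V / ((n : ℝ) + 1) ^ 2 := by
        field_simp
        ring
      have e2 : 0 ≤ ((1 - a) * (n - 1) + 1) * V / ((n : ℝ) + 1) ^ 2 := by
        have : 0 ≤ (1 - a) * ((n : ℝ) - 1) := mul_nonneg (by linarith) (by linarith)
        positivity
      linarith
    linarith
  have hae := ae_summable_of_summable_integral μ (fun n ω => y n ω ^ 2 / ((n : ℝ) + 1))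
    (fun n ω => by positivity) (fun n => ((hym n).pow_const 2).div_const _)
    (fun n => (hy2i n).div_const _) (by simpa only [integral_div] using hsumV)
  filter_upwards [hae] with ω hω
  have hlim := (tendsto_zero_of_summable_sq_div (fun n => y n ω) 2 (fun n => hinc n ω) hω).add_const
    (m : ℝ)⁻¹
  rw [zero_add] at hlim
  refine hlim.congr' ?_
  filter_upwards [eventually_ge_atTop 1] with n hn
  have hn0 : (n : ℝ) ≠ 0 := by positivity
  simp only [hy, hX, hI, Finset.sum_sub_distrib, Finset.sum_const, Nat.card_Icc,
    Nat.add_sub_cancel, nsmul_eq_mul]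
  field_simp
  ring

/-- Law of large numbers for the sum of the steps of a single reinforced sequence. -/
lemma ae_tendsto_average {Ω : Type*} [MeasurableSpace Ω] (μ : Measure Ω)
    [IsProbabilityMeasure μ] (d m : ℕ) (hm : 2 ≤ m) (u : Fin m → Fin d → ℝ)
    (p : ℝ) (hp1 : p < 1) (ξ : ℕ → Ω → Fin m) (hξ : ∀ n, Measurable (ξ n))
    (hcond : ∀ n : ℕ, 1 ≤ n → ∀ j : Fin m,
      (μ[(fun ω => if ξ (n + 1) ω = j then (1 : ℝ) else 0) | stepFiltration ξ n]) =ᵐ[μ]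
        (fun ω => (1 / (n : ℝ)) * ∑ k ∈ Finset.Icc 1 n,
          (p * (if ξ k ω = j then (1 : ℝ) else 0)
            + ((1 - p) / ((m : ℝ) - 1)) * (if ξ k ω = j then (0 : ℝ) else 1)))) :
    ∀ᵐ ω ∂μ, Tendsto (fun n : ℕ => (n : ℝ)⁻¹ • ∑ k ∈ Finset.Icc 1 n, u (ξ k ω)) atTop
      (𝓝 ((m : ℝ)⁻¹ • ∑ i, u i)) := by
  have hall := ae_all_iff.2 fun j =>
    ae_tendsto_frequency μ m hm p hp1 ξ hξ j fun n hn => hcond n hn j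
  filter_upwards [hall] with ω hω
  have hlim := tendsto_finsetSum Finset.univ fun j _ => (hω j).smul_const (u j)
  rw [← Finset.smul_sum] at hlim
  refine hlim.congr fun n => ?_
  simp_rw [mul_smul, ← Finset.smul_sum, Finset.sum_smul]
  rw [Finset.sum_comm]
  simp

/-! ### Interlacing the two sequences -/

lemma tendsto_ratio_half (f : ℕ → ℕ) (hf : ∀ n, n ≤ 2 * f n + 1 ∧ 2 * f n ≤ n + 1) :
    Tendsto (fun n : ℕ => (n : ℝ)⁻¹ * (f n : ℝ)) atTop (𝓝 (1 / 2)) := by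
  rw [tendsto_iff_dist_tendsto_zero]
  refine squeeze_zero' (Eventually.of_forall fun _ => dist_nonneg) ?_
    tendsto_one_div_atTop_nhds_zero_nat
  filter_upwards [eventually_ge_atTop 1] with n hn
  have hn0 : (0 : ℝ) < n := by exact_mod_cast hn
  have h1 : (n : ℝ) ≤ 2 * f n + 1 := by exact_mod_cast (hf n).1
  have h2 : 2 * (f n : ℝ) ≤ n + 1 := by exact_mod_cast (hf n).2
  have : (n : ℝ)⁻¹ * (f n : ℝ) - 1 / 2 = (2 * f n - n) / 2 / n := by
    field_simp
  rw [Real.dist_eq, this, abs_div, abs_of_pos hn0]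
  gcongr
  rw [abs_le]
  constructor <;> linarith

/-- Reading averages along a time change `f n ∼ n / 2` halves the limit. -/
lemma tendsto_average_half {d : ℕ} (A : ℕ → Fin d → ℝ) (L : Fin d → ℝ) (f : ℕ → ℕ)
    (hf : ∀ n, n ≤ 2 * f n + 1 ∧ 2 * f n ≤ n + 1)
    (hA : Tendsto (fun n : ℕ => (n : ℝ)⁻¹ • A n) atTop (𝓝 L)) :
    Tendsto (fun n : ℕ => (n : ℝ)⁻¹ • A (f n)) atTop (𝓝 ((1 / 2 : ℝ) • L)) := by
  have hftop : Tendsto f atTop atTop := tendsto_atTop.2 fun b => by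
    filter_upwards [eventually_ge_atTop (2 * b + 1)] with n hn
    have := (hf n).1
    omega
  refine ((tendsto_ratio_half f hf).smul (hA.comp hftop)).congr' ?_
  filter_upwards [hftop.eventually (eventually_ge_atTop 1)] with n hn
  have : (f n : ℝ) ≠ 0 := by positivity
  simp only [Function.comp]
  rw [smul_smul, mul_assoc, mul_inv_cancel₀ this, mul_one]

/-- **Law of large numbers for the Type-II elephant random walk**: for every memory
parameter `p ∈ (0,1)`, almost surely `S n / n → (ū + w̄)/2` as `n → ∞`. -/
theorem typeII_ERW_law_of_large_numbers
    {Ω : Type*} [MeasurableSpace Ω] (μ : Measure Ω) [IsProbabilityMeasure μ]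
    (d m m' : ℕ) (hm : 2 ≤ m) (hm' : 2 ≤ m')
    (u : Fin m → Fin d → ℝ) (hu : Function.Injective u)
    (w : Fin m' → Fin d → ℝ) (hw : Function.Injective w)
    (p : ℝ) (hp0 : 0 < p) (hp1 : p < 1) (i0 : Fin m) (j0 : Fin m')
    (ξ : ℕ → Ω → Fin m) (η : ℕ → Ω → Fin m')
    (hERW : IsTypeIIERW μ m m' p i0 j0 ξ η)
    (S : ℕ → Ω → Fin d → ℝ)
    (hS0 : ∀ ω, S 0 ω = 0)
    (hSeven : ∀ n : ℕ, ∀ ω, S (2 * n) ω = ∑ k ∈ Finset.Icc 1 n, (u (ξ k ω) + w (η k ω)))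
    (hSodd : ∀ n : ℕ, 1 ≤ n → ∀ ω, S (2 * n - 1) ω = S (2 * n - 2) ω + u (ξ n ω)) :
    ∀ᵐ ω ∂μ, Tendsto (fun n : ℕ => (n : ℝ)⁻¹ • S n ω)
      atTop (𝓝 ((1 / 2 : ℝ) • ((m : ℝ)⁻¹ • ∑ i, u i + (m' : ℝ)⁻¹ • ∑ j, w j))) := by
  filter_upwards [ae_tendsto_average μ d m hm u p hp1 ξ hERW.measurable_fst hERW.cond_fst,
    ae_tendsto_average μ d m' hm' w p hp1 η hERW.measurable_snd hERW.cond_snd] with ω hA hB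
  have hsplit : ∀ n, S n ω = ∑ k ∈ Finset.Icc 1 ((n + 1) / 2), u (ξ k ω)
      + ∑ k ∈ Finset.Icc 1 (n / 2), w (η k ω) := by
    intro n
    obtain ⟨k, rfl | rfl⟩ := Nat.even_or_odd' n
    · rw [hSeven, Finset.sum_add_distrib, show (2 * k + 1) / 2 = k by omega,
        show 2 * k / 2 = k by omega]
    · have h := hSodd (k + 1) (by omega) ω
      rw [show 2 * (k + 1) - 1 = 2 * k + 1 by omega, show 2 * (k + 1) - 2 = 2 * k by omega,
        hSeven, Finset.sum_add_distrib] at h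
      rw [h, show (2 * k + 1 + 1) / 2 = k + 1 by omega, show (2 * k + 1) / 2 = k by omega,
        Finset.sum_Icc_succ_top (by omega)]
      abel
  have hlim := (tendsto_average_half _ _ (fun n => (n + 1) / 2) (fun n => by omega) hA).add
    (tendsto_average_half _ _ (fun n => n / 2) (fun n => by omega) hB)
  rw [← smul_add] at hlim
  refine hlim.congr fun n => ?_
  rw [hsplit, smul_add]
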